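/- arXiv:2310.16316 — 2 statements merged into one kernel-verified Lean document; each statement's English description precedes it below -/
import Mathlib

section
/- Let S₁, S₂, S₃ be nonempty pairwise disjoint subsets of {1,…,d}, let G₁ = S₁ ∪ S₂ and G₂ = S₂ ∪ S₃, and let p₂(x) = ∏_{i∈G₁} x_i + ∏_{j∈G₂} x_j. At the input x = 1_d, for every feature attribution α ∈ ℝ^d the sum of the insertion errors on the three subsets S₁, S₂, and G₁ = S₁∪S₂ is at least 1: |Σ_{i∈S₁} α_i| + |Σ_{i∈S₂} α_i| + |1 − Σ_{i∈G₁} α_i| ≥ 1. In particular, some subset S has insertion error at least 1/3. -/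
/-!
The sums `∑ i ∈ S, α i` are additive over disjoint sets, so the insertion errors on `S`, `T` and
`S ∪ T` together are at least the interaction `f x_{S ∪ T} - f x_S - f x_T + f 0` of the model.
The monomial over `S ∪ T` has full interaction, because it vanishes as soon as `S` or `T` is
masked. Every other nonnegative monomial is supermodular in the set of unmasked features, so adding
it cannot lower the interaction.
-/

section InsertionError

variable {ι X M : Type*} [DecidableEq ι]
  [AddCommGroup M] [LinearOrder M]

/-- The insertion error `InsErr(α, S) = |f(x_S) - f(0) - ∑ i ∈ S, α i|`: how far the attribution `α`
is from predicting the effect of revealing the features in `S`. The masked input `x_S` is encoded as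
`S.piecewise x 0`. -/
def insertionError [Zero X] (f : (ι → X) → M) (x : ι → X) (α : ι → M) (S : Finset ι) : M :=
  |f (S.piecewise x 0) - f 0 - ∑ i ∈ S, α i|

variable [IsOrderedAddMonoid M] {S T : Finset ι}

theorem abs_sub_sub_le_of_disjoint (h : Disjoint S T) (α : ι → M) (a b c : M) :
    |c - a - b| ≤ |a - ∑ i ∈ S, α i| + |b - ∑ i ∈ T, α i| + |c - ∑ i ∈ S ∪ T, α i| := by
  have split : c - a - b =
      (c - ∑ i ∈ S ∪ T, α i) - (a - ∑ i ∈ S, α i) - (b - ∑ i ∈ T, α i) := by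
    rw [Finset.sum_union h]
    abel
  calc |c - a - b|
      = |(c - ∑ i ∈ S ∪ T, α i) - (a - ∑ i ∈ S, α i) - (b - ∑ i ∈ T, α i)| := by rw [split]
    _ ≤ |(c - ∑ i ∈ S ∪ T, α i) - (a - ∑ i ∈ S, α i)| + |b - ∑ i ∈ T, α i| := abs_sub _ _
    _ ≤ |c - ∑ i ∈ S ∪ T, α i| + |a - ∑ i ∈ S, α i| + |b - ∑ i ∈ T, α i| := by
      gcongr
      exact abs_sub _ _
    _ = |a - ∑ i ∈ S, α i| + |b - ∑ i ∈ T, α i| + |c - ∑ i ∈ S ∪ T, α i| := by abel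

theorem interaction_le_sum_insertionError [Zero X] (h : Disjoint S T) (f : (ι → X) → M)
    (x : ι → X) (α : ι → M) :
    f ((S ∪ T).piecewise x 0) - f (S.piecewise x 0) - f (T.piecewise x 0) + f 0 ≤
      insertionError f x α S + insertionError f x α T + insertionError f x α (S ∪ T) := by
  calc f ((S ∪ T).piecewise x 0) - f (S.piecewise x 0) - f (T.piecewise x 0) + f 0
      = (f ((S ∪ T).piecewise x 0) - f 0) - (f (S.piecewise x 0) - f 0) -
          (f (T.piecewise x 0) - f 0) := by abel
    _ ≤ _ := (le_abs_self _).trans (abs_sub_sub_le_of_disjoint h α _ _ _)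

end InsertionError

section Monomial

variable {ι R : Type*} [DecidableEq ι]

theorem prod_piecewise_zero [CommMonoidWithZero R] (G S : Finset ι) (x : ι → R) :
    ∏ i ∈ G, S.piecewise x 0 i = if G ⊆ S then ∏ i ∈ G, x i else 0 :=
  Finset.prod_ite_zero

theorem prod_union_piecewise_zero_left [CommMonoidWithZero R] {S T : Finset ι}
    (h : Disjoint S T) (hT : T.Nonempty) (x : ι → R) :
    ∏ i ∈ S ∪ T, S.piecewise x 0 i = 0 := by
  obtain ⟨i, hi⟩ := hT
  exact Finset.prod_eq_zero (Finset.mem_union_right S hi)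
    (Finset.piecewise_eq_of_notMem S x 0 (Finset.disjoint_right.mp h hi))

theorem prod_piecewise_zero_add_le_union_add_inter [CommSemiring R] [Preorder R]
    {G : Finset ι} {x : ι → R} (hx : 0 ≤ ∏ i ∈ G, x i) (S T : Finset ι) :
    ∏ i ∈ G, S.piecewise x 0 i + ∏ i ∈ G, T.piecewise x 0 i ≤
      ∏ i ∈ G, (S ∪ T).piecewise x 0 i + ∏ i ∈ G, (S ∩ T).piecewise x 0 i := by
  have union_of_left : G ⊆ S → G ⊆ S ∪ T := fun h => h.trans Finset.subset_union_left
  have union_of_right : G ⊆ T → G ⊆ S ∪ T := fun h => h.trans Finset.subset_union_right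
  simp only [prod_piecewise_zero, Finset.subset_inter_iff]
  by_cases hS : G ⊆ S <;> by_cases hT : G ⊆ T
  · simp [hS, hT, union_of_left hS]
  · simp [hS, hT, union_of_left hS]
  · simp [hS, hT, union_of_right hT]
  · simp only [hS, hT, and_self, if_false, add_zero]
    split_ifs
    exacts [hx, le_rfl]

/-- The binomial model `p₂(x) = ∏ i ∈ G₁, x i + ∏ j ∈ G₂, x j`, for arbitrary index sets. -/
def binomialModel [CommSemiring R] (G₁ G₂ : Finset ι) (x : ι → R) : R :=
  ∏ i ∈ G₁, x i + ∏ j ∈ G₂, x j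

end Monomial

section Binomial

variable {ι R : Type*} [DecidableEq ι] {S T G : Finset ι} {x : ι → R}

theorem prod_le_interaction_binomialModel [CommRing R] [PartialOrder R] [IsOrderedRing R]
    (hS : S.Nonempty) (hT : T.Nonempty) (h : Disjoint S T) (hx : 0 ≤ ∏ i ∈ G, x i) :
    ∏ i ∈ S ∪ T, x i ≤
      binomialModel (S ∪ T) G ((S ∪ T).piecewise x 0) - binomialModel (S ∪ T) G (S.piecewise x 0) -
        binomialModel (S ∪ T) G (T.piecewise x 0) + binomialModel (S ∪ T) G 0 := by
  have on_union : ∏ i ∈ S ∪ T, (S ∪ T).piecewise x 0 i = ∏ i ∈ S ∪ T, x i := by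
    rw [prod_piecewise_zero, if_pos subset_rfl]
  have on_left : ∏ i ∈ S ∪ T, S.piecewise x 0 i = 0 := prod_union_piecewise_zero_left h hT x
  have on_right : ∏ i ∈ S ∪ T, T.piecewise x 0 i = 0 := by
    rw [Finset.union_comm]
    exact prod_union_piecewise_zero_left h.symm hS x
  have on_empty : ∏ i ∈ S ∪ T, (0 : ι → R) i = 0 :=
    Finset.prod_eq_zero (Finset.mem_union_left T hS.choose_spec) rfl
  have supermodular := prod_piecewise_zero_add_le_union_add_inter hx S T
  rw [Finset.disjoint_iff_inter_eq_empty.mp h, Finset.piecewise_empty] at supermodular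
  simp only [binomialModel, on_union, on_left, on_right, on_empty]
  exact (le_add_of_nonneg_right (sub_nonneg.mpr supermodular)).trans_eq (by ring)

theorem binomial_insertion_error_three_subsets_ge_one_general
    [Field R] [LinearOrder R] [IsStrictOrderedRing R]
    (hS : S.Nonempty) (hT : T.Nonempty) (h : Disjoint S T) (hx : 0 ≤ ∏ i ∈ G, x i) (α : ι → R) :
    (∏ i ∈ S ∪ T, x i ≤
      |∑ i ∈ S, α i| + |∑ i ∈ T, α i| + |∏ i ∈ S ∪ T, x i - ∑ i ∈ S ∪ T, α i|) ∧
    ∃ U ∈ ({S, T, S ∪ T} : Finset (Finset ι)),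
      (∏ i ∈ S ∪ T, x i) / 3 ≤ insertionError (binomialModel (S ∪ T) G) x α U := by
  constructor
  · have bound := abs_sub_sub_le_of_disjoint h α 0 0 (∏ i ∈ S ∪ T, x i)
    simp only [sub_zero, zero_sub, abs_neg] at bound
    exact (le_abs_self _).trans bound
  · have bound := (prod_le_interaction_binomialModel hS hT h hx).trans
      (interaction_le_sum_insertionError h _ x α)
    by_contra! small
    have small_S := small S (by simp)
    have small_T := small T (by simp)
    have small_union := small (S ∪ T) (by simp)
    linarith

end Binomial

/-- For the binomial model `p₂` with `G₁ = S₁ ∪ S₂`, `G₂ = S₂ ∪ S₃` for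
nonempty pairwise disjoint `S₁, S₂, S₃`, at `x = 1_d` (where the insertion errors on
`S₁`, `S₂`, `G₁` are `|∑_{i∈S₁} α_i|`, `|∑_{i∈S₂} α_i|`, `|1 − ∑_{i∈G₁} α_i|`), every
attribution `α` has these three insertion errors summing to at least 1; in particular
some subset `S` has insertion error at least 1/3. -/
theorem binomial_insertion_error_three_subsets_ge_one
    (d : ℕ) (S₁ S₂ S₃ : Finset (Fin d))
    (h₁ : S₁.Nonempty) (h₂ : S₂.Nonempty) (h₃ : S₃.Nonempty)
    (h₁₂ : Disjoint S₁ S₂) (h₁₃ : Disjoint S₁ S₃) (h₂₃ : Disjoint S₂ S₃)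
    (α : Fin d → ℝ) :
    (|∑ i ∈ S₁, α i| + |∑ i ∈ S₂, α i| + |1 - ∑ i ∈ S₁ ∪ S₂, α i| ≥ 1) ∧
    ∃ S : Finset (Fin d),
      |((∏ i ∈ S₁ ∪ S₂, (if i ∈ S then (1 : ℝ) else 0)) +
          ∏ j ∈ S₂ ∪ S₃, (if j ∈ S then (1 : ℝ) else 0)) -
        ((∏ _i ∈ S₁ ∪ S₂, (0 : ℝ)) + ∏ _j ∈ S₂ ∪ S₃, (0 : ℝ)) -
        ∑ i ∈ S, α i| ≥ 1 / 3 := by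
  obtain ⟨sum_ge, S, -, error_ge⟩ := binomial_insertion_error_three_subsets_ge_one_general
    (G := S₂ ∪ S₃) (x := 1) h₁ h₂ h₁₂ (by simp) α
  simp only [Pi.one_apply, Finset.prod_const_one] at sum_ge error_ge
  exact ⟨sum_ge, S, error_ge⟩
end

section
/- Let d ≥ 2, let p₁ : ℝ^d → ℝ be the monomial model p₁(x) = ∏_{i=1}^d x_i, and let x = 1_d. The grouped attribution β = {({1,…,d}, 1)} achieves total grouped deletion error 0 summed over all nonempty subsets S ⊆ {1,…,d}, whereas every feature attribution α ∈ ℝ^d has total deletion error Σ_{∅ ≠ S ⊆ {1,…,d}} |1 − Σ_{i∈S} α_i| ≥ 1. Hence grouped attributions achieve strictly lower total deletion error than every feature attribution for p₁. -/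
/-!
A feature attribution is additive over disjoint groups of features, so the amount by which the
drop `S ↦ f x - f x_{¬S}` fails to be additive on two disjoint groups is a lower bound for the
total deletion error. Every nonempty deletion makes a monomial drop by its whole value `p`; two
distinct singletons and their union then give the defect `p + p - p = p`. A single group
containing every feature is charged exactly once whatever is deleted, so scoring it `p` is exact.
-/

section Deletion

variable {ι κ M R : Type*} [DecidableEq ι]

/-- The vector `x_{¬S}`: the input `x` with the coordinates in `S` replaced by the baseline `0`. -/
def deleteFeatures [Zero M] (x : ι → M) (S : Finset ι) : ι → M :=
  S.piecewise 0 x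

/-- The drop `f x - f x_{¬S}` that an attribution has to predict. -/
def deletionDrop [Zero M] [Sub R] (f : (ι → M) → R) (x : ι → M) (S : Finset ι) : R :=
  f x - f (deleteFeatures x S)

variable [Zero M] [AddCommGroup R] [LinearOrder R]

/-- The deletion error of the feature attribution `α` on `S` for the model `f` at `x`. -/
def deletionError (f : (ι → M) → R) (x : ι → M) (α : ι → R) (S : Finset ι) : R :=
  |deletionDrop f x S - ∑ i ∈ S, α i|

/-- The deletion error on `S` of the grouped attribution `{(groups k, scores k)}`, indexed by a
finite type so that a pair may occur more than once. -/
def groupedDeletionError [Fintype κ] (f : (ι → M) → R) (x : ι → M)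
    (groups : κ → Finset ι) (scores : κ → R) (S : Finset ι) : R :=
  |deletionDrop f x S - ∑ k with (S ∩ groups k).Nonempty, scores k|

theorem groupedDeletionError_univ [Fintype ι] [Fintype κ] [Unique κ] (f : (ι → M) → R)
    (x : ι → M) (c : R) {S : Finset ι} (hS : S.Nonempty) :
    groupedDeletionError f x (fun _ : κ => Finset.univ) (fun _ => c) S =
      |deletionDrop f x S - c| := by
  simp [groupedDeletionError, hS]

variable [IsOrderedAddMonoid R]

theorem abs_deletionDrop_add_sub_union_le (f : (ι → M) → R) (x : ι → M) (α : ι → R)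
    {S T : Finset ι} (hST : Disjoint S T) :
    |deletionDrop f x S + deletionDrop f x T - deletionDrop f x (S ∪ T)| ≤
      deletionError f x α S + deletionError f x α T + deletionError f x α (S ∪ T) := by
  have hsplit : deletionDrop f x S + deletionDrop f x T - deletionDrop f x (S ∪ T) =
      (deletionDrop f x S - ∑ i ∈ S, α i) + (deletionDrop f x T - ∑ i ∈ T, α i) +
        -(deletionDrop f x (S ∪ T) - ∑ i ∈ S ∪ T, α i) := by
    rw [Finset.sum_union hST]
    abel
  rw [hsplit]
  exact (abs_add_three _ _ _).trans_eq (by simp only [abs_neg, deletionError])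

end Deletion

theorem add_add_union_le_sum_nonempty {ι R : Type*} [Fintype ι] [DecidableEq ι]
    [AddCommMonoid R] [PartialOrder R] [IsOrderedAddMonoid R] {g : Finset ι → R} (hg : 0 ≤ g)
    {S T : Finset ι} (hS : S.Nonempty) (hT : T.Nonempty) (hST : Disjoint S T) :
    g S + g T + g (S ∪ T) ≤ ∑ U with U.Nonempty, g U := by
  have hne : S ≠ T := hST.ne hS.ne_empty
  have hneS : S ≠ S ∪ T := fun h =>
    hT.ne_empty (hST.eq_bot_of_ge (Finset.union_eq_left.mp h.symm))
  have hneT : T ≠ S ∪ T := fun h =>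
    hS.ne_empty (hST.eq_bot_of_le (Finset.union_eq_right.mp h.symm))
  calc g S + g T + g (S ∪ T) = ∑ U ∈ {S, T, S ∪ T}, g U := by
        rw [Finset.sum_insert (by simp [hne, hneS]), Finset.sum_pair hneT, add_assoc]
    _ ≤ ∑ U with U.Nonempty, g U :=
        Finset.sum_le_sum_of_subset_of_nonneg
          (by simp [Finset.insert_subset_iff, hS, hT, hS.mono Finset.subset_union_left])
          (fun U _ _ => hg U)

theorem abs_deletionDrop_add_sub_union_le_sum_deletionError {ι M R : Type*} [Fintype ι]
    [DecidableEq ι] [Zero M] [AddCommGroup R] [LinearOrder R] [IsOrderedAddMonoid R]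
    (f : (ι → M) → R) (x : ι → M) (α : ι → R) {S T : Finset ι}
    (hS : S.Nonempty) (hT : T.Nonempty) (hST : Disjoint S T) :
    |deletionDrop f x S + deletionDrop f x T - deletionDrop f x (S ∪ T)| ≤
      ∑ U with U.Nonempty, deletionError f x α U :=
  (abs_deletionDrop_add_sub_union_le f x α hST).trans
    (add_add_union_le_sum_nonempty (fun _ => abs_nonneg _) hS hT hST)

section Monomial

/-- The monomial model `p₁ x = ∏ i, x i`. -/
def monomialModel {ι R : Type*} [Fintype ι] [CommMonoid R] (x : ι → R) : R :=
  ∏ i, x i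

variable {ι R : Type*} [Fintype ι] [DecidableEq ι] [CommRing R]

theorem deletionDrop_monomialModel (x : ι → R) {S : Finset ι} (hS : S.Nonempty) :
    deletionDrop monomialModel x S = monomialModel x := by
  obtain ⟨j, hj⟩ := hS
  have hzero : monomialModel (deleteFeatures x S) = 0 :=
    Finset.prod_eq_zero (Finset.mem_univ j) (Finset.piecewise_eq_of_mem S (0 : ι → R) x hj)
  rw [deletionDrop, hzero, sub_zero]

variable [LinearOrder R]

theorem groupedDeletionError_monomialModel {κ : Type*} [Fintype κ] [Unique κ]
    [IsOrderedAddMonoid R] (x : ι → R) {S : Finset ι} (hS : S.Nonempty) :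
    groupedDeletionError monomialModel x (fun _ : κ => Finset.univ)
      (fun _ => monomialModel x) S = 0 := by
  rw [groupedDeletionError_univ _ _ _ hS, deletionDrop_monomialModel x hS, sub_self, abs_zero]

theorem sum_deletionError_monomialModel (x α : ι → R) :
    ∑ S with S.Nonempty, deletionError monomialModel x α S =
      ∑ S with S.Nonempty, |monomialModel x - ∑ i ∈ S, α i| :=
  Finset.sum_congr rfl fun S hS => by
    rw [deletionError, deletionDrop_monomialModel x (Finset.mem_filter.mp hS).2]

variable [IsOrderedAddMonoid R]

theorem abs_monomialModel_le_sum_deletionError [Nontrivial ι] (x α : ι → R) :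
    |monomialModel x| ≤ ∑ S with S.Nonempty, deletionError monomialModel x α S := by
  obtain ⟨a, b, hab⟩ := exists_pair_ne ι
  have ha := Finset.singleton_nonempty a
  have hb := Finset.singleton_nonempty b
  have hdefect := abs_deletionDrop_add_sub_union_le_sum_deletionError monomialModel x α ha hb
    (Finset.disjoint_singleton.mpr hab)
  rwa [deletionDrop_monomialModel x ha, deletionDrop_monomialModel x hb,
    deletionDrop_monomialModel x (ha.mono Finset.subset_union_left), add_sub_cancel_right]
    at hdefect

theorem monomial_grouped_beats_feature_attribution_deletion_general {κ : Type*} [Fintype κ]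
    [Unique κ] [Nontrivial ι] (x : ι → R) :
    ∑ S with S.Nonempty, groupedDeletionError monomialModel x (fun _ : κ => Finset.univ)
        (fun _ => monomialModel x) S = 0 ∧
      ∀ α : ι → R,
        |monomialModel x| ≤ ∑ S with S.Nonempty, deletionError monomialModel x α S :=
  ⟨Finset.sum_eq_zero fun _ hS =>
      groupedDeletionError_monomialModel x (Finset.mem_filter.mp hS).2,
    abs_monomialModel_le_sum_deletionError x⟩

end Monomial

/-- For the monomial model `p₁ x = ∏ i, x i` with `d ≥ 2` at `x = 1_d`,
the grouped attribution `{({1,…,d}, 1)}` achieves total grouped deletion error 0 over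
all nonempty subsets `S`, whereas every feature attribution `α ∈ ℝ^d` has total
deletion error `∑_{∅ ≠ S ⊆ {1,…,d}} |1 − ∑_{i∈S} α_i| ≥ 1`; hence grouped attributions
achieve strictly lower total deletion error. -/
theorem monomial_grouped_beats_feature_attribution_deletion
    (d : ℕ) (hd : 2 ≤ d)
    (groups : Fin 1 → Finset (Fin d)) (scores : Fin 1 → ℝ)
    (hgroups : groups = fun _ => Finset.univ) (hscores : scores = fun _ => 1) :
    (∑ S ∈ (Finset.univ : Finset (Fin d)).powerset.filter (fun S => S.Nonempty),
        |(∏ _i : Fin d, (1 : ℝ)) - (∏ i : Fin d, (if i ∈ S then (0 : ℝ) else 1)) -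
          ∑ k ∈ Finset.univ.filter (fun k => (S ∩ groups k).Nonempty), scores k| = 0) ∧
    ∀ α : Fin d → ℝ,
      ∑ S ∈ (Finset.univ : Finset (Fin d)).powerset.filter (fun S => S.Nonempty),
        |1 - ∑ i ∈ S, α i| ≥ 1 := by
  subst hgroups hscores
  have : Nontrivial (Fin d) := Fin.nontrivial_iff_two_le.mpr hd
  simpa only [sum_deletionError_monomialModel, groupedDeletionError, deletionDrop, monomialModel,
    deleteFeatures, Finset.piecewise, Pi.zero_apply, Pi.one_apply, Finset.prod_const_one,
    Finset.powerset_univ, abs_one] using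
    monomial_grouped_beats_feature_attribution_deletion_general (κ := Fin 1) (1 : Fin d → ℝ)
end
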